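/- Let 0 < p < 1 and let |χ₀⟩ = (1/√(2−p))|00⟩ + √((1−p)/(2−p))|11⟩. Then the optimal fidelity for the channel requires no local post-processing: F*(ρ(χ₀, Λ_p)) = F(ρ(χ₀, Λ_p)) = 1 − p/2. -/

import Mathlib

open Matrix Complex
open scoped Kronecker ComplexOrder

/-- Index type for two qubits: the product basis of ℂ² ⊗ ℂ². -/
abbrev Q2 := Fin 2 × Fin 2

/-- Kraus operator `M₀` of the amplitude damping channel. -/
noncomputable def M0 (p : ℝ) : Matrix (Fin 2) (Fin 2) ℂ :=
  !![1, 0; 0, (Real.sqrt (1 - p) : ℂ)]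

/-- Kraus operator `M₁` of the amplitude damping channel. -/
noncomputable def M1 (p : ℝ) : Matrix (Fin 2) (Fin 2) ℂ :=
  !![0, (Real.sqrt p : ℂ); 0, 0]

/-- Outer product `|ψ⟩⟨ψ|` of a two-qubit vector. -/
noncomputable def outer (ψ : Q2 → ℂ) : Matrix Q2 Q2 ℂ :=
  Matrix.of fun i j => ψ i * star (ψ j)

/-- The state `ρ(χ, Λ_p)` obtained by applying the amplitude damping channel
with parameter `p` to the second qubit: `Σᵢ (I ⊗ Mᵢ) ρ (I ⊗ Mᵢ)†`. -/
noncomputable def ampDamp (p : ℝ) (ρ : Matrix Q2 Q2 ℂ) : Matrix Q2 Q2 ℂ :=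
  ((1 : Matrix (Fin 2) (Fin 2) ℂ) ⊗ₖ M0 p) * ρ * ((1 : Matrix (Fin 2) (Fin 2) ℂ) ⊗ₖ M0 p)ᴴ +
  ((1 : Matrix (Fin 2) (Fin 2) ℂ) ⊗ₖ M1 p) * ρ * ((1 : Matrix (Fin 2) (Fin 2) ℂ) ⊗ₖ M1 p)ᴴ

/-- The pure state `|χ⟩ = a|00⟩ + b|11⟩`. -/
noncomputable def ketChi (a b : ℝ) : Q2 → ℂ :=
  fun ij => if ij = ((0 : Fin 2), (0 : Fin 2)) then (a : ℂ)
    else if ij = ((1 : Fin 2), (1 : Fin 2)) then (b : ℂ) else 0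

/-- The maximally entangled state `|Φ⁺⟩ = (|00⟩ + |11⟩)/√2`. -/
noncomputable def phiPlus : Q2 → ℂ := ketChi (Real.sqrt 2)⁻¹ (Real.sqrt 2)⁻¹

/-- The optimal transmitted state `|χ₀⟩ = (1/√(2−p))|00⟩ + √((1−p)/(2−p))|11⟩`. -/
noncomputable def ketChi0 (p : ℝ) : Q2 → ℂ :=
  ketChi (Real.sqrt (1 / (2 - p))) (Real.sqrt ((1 - p) / (2 - p)))

/-- Reduced density matrix on the first qubit (trace out the second qubit). -/
noncomputable def trSecond (ρ : Matrix Q2 Q2 ℂ) : Matrix (Fin 2) (Fin 2) ℂ :=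
  Matrix.of fun i k => ∑ j : Fin 2, ρ (i, j) (k, j)

/-- Reduced density matrix on the second qubit (trace out the first qubit). -/
noncomputable def trFirst (ρ : Matrix Q2 Q2 ℂ) : Matrix (Fin 2) (Fin 2) ℂ :=
  Matrix.of fun j l => ∑ i : Fin 2, ρ (i, j) (i, l)

/-- A unit vector `ψ ∈ ℂ²⊗ℂ²` is maximally entangled if both reduced density
matrices of `|ψ⟩⟨ψ|` equal `I/2`. -/
def MaxEnt (ψ : Q2 → ℂ) : Prop :=
  (∑ ij : Q2, Complex.normSq (ψ ij)) = 1 ∧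
  trSecond (outer ψ) = (1 / 2 : ℂ) • (1 : Matrix (Fin 2) (Fin 2) ℂ) ∧
  trFirst (outer ψ) = (1 / 2 : ℂ) • (1 : Matrix (Fin 2) (Fin 2) ℂ)

/-- The real expectation value `⟨ψ|ρ|ψ⟩`. -/
noncomputable def expectation (ψ : Q2 → ℂ) (ρ : Matrix Q2 Q2 ℂ) : ℝ :=
  (∑ i : Q2, ∑ j : Q2, star (ψ i) * ρ i j * ψ j).re

/-- Fidelity (fully entangled fraction): `F(ρ) = sup_Ψ ⟨Ψ|ρ|Ψ⟩` over maximally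
entangled unit vectors `Ψ`. -/
noncomputable def Fid (ρ : Matrix Q2 Q2 ℂ) : ℝ :=
  sSup {x : ℝ | ∃ ψ : Q2 → ℂ, MaxEnt ψ ∧ x = expectation ψ ρ}

/-- Partial transposition on the second qubit: `(ρ^Γ)_{(i,j),(k,l)} = ρ_{(i,l),(k,j)}`. -/
def ptrans (ρ : Matrix Q2 Q2 ℂ) : Matrix Q2 Q2 ℂ :=
  Matrix.of fun ij kl => ρ (ij.1, kl.2) (kl.1, ij.2)

/-- The Verstraete–Verschelde maximum achievable fidelity under trace-preserving LOCC,
as the value of the semidefinite program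
`F*(ρ) = sup { 1/2 − Tr(X ρ^Γ) : X Hermitian, 0 ≤ X ≤ I, −I/2 ≤ X^Γ ≤ I/2 }`. -/
noncomputable def FStar (ρ : Matrix Q2 Q2 ℂ) : ℝ :=
  sSup {x : ℝ | ∃ X : Matrix Q2 Q2 ℂ,
    X.IsHermitian ∧ X.PosSemidef ∧ ((1 : Matrix Q2 Q2 ℂ) - X).PosSemidef ∧
    (ptrans X + (1 / 2 : ℂ) • (1 : Matrix Q2 Q2 ℂ)).PosSemidef ∧
    ((1 / 2 : ℂ) • (1 : Matrix Q2 Q2 ℂ) - ptrans X).PosSemidef ∧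
    x = 1 / 2 - ((X * ptrans ρ).trace).re}

/-- The Pauli matrix `σ_y`. -/
noncomputable def sigY : Matrix (Fin 2) (Fin 2) ℂ := !![0, -Complex.I; Complex.I, 0]

/-- The matrix `ρ (σ_y⊗σ_y) ρ̄ (σ_y⊗σ_y)` whose eigenvalues define the concurrence. -/
noncomputable def Rmat (ρ : Matrix Q2 Q2 ℂ) : Matrix Q2 Q2 ℂ :=
  ρ * (sigY ⊗ₖ sigY) * ρ.map (starRingEnd ℂ) * (sigY ⊗ₖ sigY)

/-- `c` is the concurrence of `ρ`: `c = max(0, λ₁ − λ₂ − λ₃ − λ₄)` where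
`λ₁ ≥ λ₂ ≥ λ₃ ≥ λ₄ ≥ 0` are the square roots of the eigenvalues (with multiplicity)
of `ρ (σ_y⊗σ_y) ρ̄ (σ_y⊗σ_y)`. -/
def IsConcurrence (ρ : Matrix Q2 Q2 ℂ) (c : ℝ) : Prop :=
  ∃ lam : Fin 4 → ℝ,
    (∀ i j : Fin 4, i ≤ j → lam j ≤ lam i) ∧
    (∀ i : Fin 4, 0 ≤ lam i) ∧
    (Rmat ρ).charpoly = ∏ i : Fin 4, (Polynomial.X - Polynomial.C ((lam i : ℂ) ^ 2)) ∧
    c = max 0 (lam 0 - lam 1 - lam 2 - lam 3)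

/-- `μ` is an eigenvalue of the matrix `A`. -/
def IsEigenvalue (A : Matrix Q2 Q2 ℂ) (μ : ℂ) : Prop :=
  ∃ v : Q2 → ℂ, v ≠ 0 ∧ A *ᵥ v = μ • v

lemma psd_of_proj (A : Matrix Q2 Q2 ℂ) (h : Aᴴ * A = A) : A.PosSemidef := by
  rw [← h]; exact Matrix.posSemidef_conjTranspose_mul_self A

lemma conj_two : (starRingEnd ℂ) 2 = 2 := map_ofNat _ 2

lemma psd_two (A : Matrix Q2 Q2 ℂ) (h : A.PosSemidef) (i j : Q2) :
    0 ≤ (A i i).re + (A j j).re + (A i j).re + (A j i).re := by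
  have h1 := h.dotProduct_mulVec_nonneg (Pi.single i 1 + Pi.single j 1)
  have h2 := (Complex.le_def.1 h1).1
  simp [Matrix.mulVec_add, dotProduct_add, add_dotProduct] at h2
  linarith

lemma psd_one (A : Matrix Q2 Q2 ℂ) (h : A.PosSemidef) (i : Q2) : 0 ≤ (A i i).re :=
  (Complex.le_def.1 (h.diag_nonneg (i := i))).1

/-- Explicit entries of the output state. -/
noncomputable def rhoE (p : ℝ) : Matrix Q2 Q2 ℂ := Matrix.of fun i j =>
  if i = (0, 0) ∧ j = (0, 0) then ((1 / (2 - p) : ℝ) : ℂ)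
  else if i = (0, 0) ∧ j = (1, 1) then (((1 - p) / (2 - p) : ℝ) : ℂ)
  else if i = (1, 1) ∧ j = (0, 0) then (((1 - p) / (2 - p) : ℝ) : ℂ)
  else if i = (1, 1) ∧ j = (1, 1) then (((1 - p) ^ 2 / (2 - p) : ℝ) : ℂ)
  else if i = (1, 0) ∧ j = (1, 0) then ((p * (1 - p) / (2 - p) : ℝ) : ℂ)
  else 0

lemma rho_eq (p : ℝ) (hp0 : 0 < p) (hp1 : p < 1) :
    ampDamp p (outer (ketChi0 p)) = rhoE p := by
  have h2 : 0 < 2 - p := by linarith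
  have ha : √(1 / (2 - p)) * √(1 / (2 - p)) = 1 / (2 - p) :=
    Real.mul_self_sqrt (by positivity)
  have hb : √((1 - p) / (2 - p)) = √(1 - p) * √(1 / (2 - p)) := by
    rw [← Real.sqrt_mul (by linarith)]; congr 1; ring
  have hq : √(1 - p) * √(1 - p) = 1 - p := Real.mul_self_sqrt (by linarith)
  have hp : √p * √p = p := Real.mul_self_sqrt hp0.le
  have e1 : 1 / (2 - p) = √(1 / (2 - p)) * √(1 / (2 - p)) := ha.symm
  have e2 : (1 - p) / (2 - p) = √(1 - p) * √(1 - p) * (√(1 / (2 - p)) * √(1 / (2 - p))) := by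
    rw [ha, hq]; ring
  have e3 : (1 - p) ^ 2 / (2 - p) =
      (√(1 - p) * √(1 - p)) ^ 2 * (√(1 / (2 - p)) * √(1 / (2 - p))) := by
    rw [ha, hq]; ring
  have e4 : p * (1 - p) / (2 - p) =
      √p * √p * (√(1 - p) * √(1 - p)) * (√(1 / (2 - p)) * √(1 / (2 - p))) := by
    rw [ha, hq, hp]; ring
  unfold ketChi0 rhoE ampDamp M0 M1
  rw [hb, e2, e3, e4, e1]
  simp only [Real.sqrt_mul_self (Real.sqrt_nonneg (1 / (2 - p)))]
  generalize √(1 / (2 - p)) = a at *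
  generalize √(1 - p) = c at *
  generalize √p = d at *
  ext ⟨i1, i2⟩ ⟨j1, j2⟩
  fin_cases i1 <;> fin_cases i2 <;> fin_cases j1 <;> fin_cases j2 <;>
    simp [outer, ketChi, Matrix.mul_apply, Fintype.sum_prod_type, Matrix.conjTranspose_apply,
      Matrix.kroneckerMap_apply, Matrix.one_apply] <;> ring

lemma trace_val (p : ℝ) (X : Matrix Q2 Q2 ℂ) :
    ((X * ptrans (rhoE p)).trace).re =
      (1 / (2 - p)) * (X (0, 0) (0, 0)).re + ((1 - p) ^ 2 / (2 - p)) * (X (1, 1) (1, 1)).re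
      + (p * (1 - p) / (2 - p)) * (X (1, 0) (1, 0)).re
      + ((1 - p) / (2 - p)) * ((X (0, 1) (1, 0)).re + (X (1, 0) (0, 1)).re) := by
  have h : (X * ptrans (rhoE p)).trace =
      X (0, 0) (0, 0) * ((1 / (2 - p) : ℝ) : ℂ)
      + X (1, 1) (1, 1) * (((1 - p) ^ 2 / (2 - p) : ℝ) : ℂ)
      + X (1, 0) (1, 0) * ((p * (1 - p) / (2 - p) : ℝ) : ℂ)
      + (X (0, 1) (1, 0) + X (1, 0) (0, 1)) * (((1 - p) / (2 - p) : ℝ) : ℂ) := by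
    simp [Matrix.trace, Matrix.mul_apply, Fintype.sum_prod_type, ptrans, rhoE]
    ring
  rw [h]
  simp only [Complex.add_re, Complex.re_mul_ofReal]
  ring

lemma exp_val (p : ℝ) (ψ : Q2 → ℂ) :
    expectation ψ (rhoE p) =
      (1 / (2 - p)) * normSq (ψ (0, 0) + ((1 - p : ℝ) : ℂ) * ψ (1, 1))
      + (p * (1 - p) / (2 - p)) * normSq (ψ (1, 0)) := by
  have h : (∑ i : Q2, ∑ j : Q2, star (ψ i) * rhoE p i j * ψ j) =
      (star (ψ (0, 0)) * ψ (0, 0)) * ((1 / (2 - p) : ℝ) : ℂ)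
      + (star (ψ (1, 1)) * ψ (1, 1)) * (((1 - p) ^ 2 / (2 - p) : ℝ) : ℂ)
      + (star (ψ (1, 0)) * ψ (1, 0)) * ((p * (1 - p) / (2 - p) : ℝ) : ℂ)
      + (star (ψ (0, 0)) * ψ (1, 1) + star (ψ (1, 1)) * ψ (0, 0))
        * (((1 - p) / (2 - p) : ℝ) : ℂ) := by
    simp [Fintype.sum_prod_type, rhoE]
    ring
  unfold expectation
  rw [h]
  simp only [Complex.add_re, Complex.re_mul_ofReal]
  simp [Complex.normSq_apply]
  ring

lemma maxEnt_facts (ψ : Q2 → ℂ) (h : MaxEnt ψ) :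
    normSq (ψ (0, 0)) + normSq (ψ (1, 0)) = 1 / 2 ∧
    normSq (ψ (1, 1)) + normSq (ψ (1, 0)) = 1 / 2 := by
  obtain ⟨-, h2, h3⟩ := h
  have a := congrArg Complex.re (congrFun (congrFun h2 1) 1)
  have b := congrArg Complex.re (congrFun (congrFun h3 0) 0)
  simp [trSecond, trFirst, outer] at a b
  simp only [Complex.normSq_apply]
  constructor <;> linarith

lemma maxEnt_phiPlus : MaxEnt phiPlus := by
  have hs : (√2)⁻¹ * (√2)⁻¹ = (1 / 2 : ℝ) := by
    rw [← mul_inv, Real.mul_self_sqrt (by norm_num)]; norm_num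
  have hc : ((√2 : ℝ) : ℂ)⁻¹ * ((√2 : ℝ) : ℂ)⁻¹ = 1 / 2 := by
    rw [← Complex.ofReal_inv, ← Complex.ofReal_mul, hs]; norm_num
  refine ⟨?_, ?_, ?_⟩
  · simp [Fintype.sum_prod_type, phiPlus, ketChi]
    norm_num
  · ext i j
    fin_cases i <;> fin_cases j <;>
      simp [trSecond, outer, phiPlus, ketChi, hc]
  · ext i j
    fin_cases i <;> fin_cases j <;>
      simp [trFirst, outer, phiPlus, ketChi, hc]

lemma fid_val (p : ℝ) (hp0 : 0 < p) (hp1 : p < 1) : Fid (rhoE p) = 1 - p / 2 := by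
  have h2 : 0 < 2 - p := by linarith
  refine IsLUB.csSup_eq ?_ ⟨expectation phiPlus (rhoE p), phiPlus, maxEnt_phiPlus, rfl⟩
  apply IsGreatest.isLUB
  constructor
  · refine ⟨phiPlus, maxEnt_phiPlus, ?_⟩
    have hs : (√2)⁻¹ * (√2)⁻¹ = (1 / 2 : ℝ) := by
      rw [← mul_inv, Real.mul_self_sqrt (by norm_num)]; norm_num
    rw [exp_val]
    have e : phiPlus (0, 0) + ((1 - p : ℝ) : ℂ) * phiPlus (1, 1)
        = (((2 - p) * (√2)⁻¹ : ℝ) : ℂ) := by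
      simp [phiPlus, ketChi]; ring
    have e' : phiPlus (1, 0) = 0 := by simp [phiPlus, ketChi]
    rw [e, e', Complex.normSq_ofReal, map_zero, mul_mul_mul_comm, hs]
    field_simp
    ring
  · rintro x ⟨ψ, hψ, rfl⟩
    obtain ⟨a, b⟩ := maxEnt_facts ψ hψ
    rw [exp_val]
    have h10 := Complex.normSq_nonneg (ψ (1, 0))
    have key : normSq (ψ (0, 0) + ((1 - p : ℝ) : ℂ) * ψ (1, 1))
        ≤ (2 - p) ^ 2 * (1 / 2 - normSq (ψ (1, 0))) := by
      simp only [Complex.normSq_apply] at *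
      simp only [Complex.add_re, Complex.add_im, Complex.re_ofReal_mul, Complex.im_ofReal_mul]
      generalize (ψ (0, 0)).re = x1 at *
      generalize (ψ (0, 0)).im = y1 at *
      generalize (ψ (1, 1)).re = x2 at *
      generalize (ψ (1, 1)).im = y2 at *
      nlinarith [mul_nonneg (sub_nonneg.2 hp1.le) (sq_nonneg (x1 - x2)),
        mul_nonneg (sub_nonneg.2 hp1.le) (sq_nonneg (y1 - y2))]
    have e : 1 / (2 - p) * normSq (ψ (0, 0) + ((1 - p : ℝ) : ℂ) * ψ (1, 1))
        + p * (1 - p) / (2 - p) * normSq (ψ (1, 0))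
        = (normSq (ψ (0, 0) + ((1 - p : ℝ) : ℂ) * ψ (1, 1))
          + p * (1 - p) * normSq (ψ (1, 0))) / (2 - p) := by ring
    rw [e, div_le_iff₀ h2]
    have : p * (1 - p) * normSq (ψ (1, 0)) ≤ (2 - p) ^ 2 * normSq (ψ (1, 0)) :=
      mul_le_mul_of_nonneg_right (by nlinarith) h10
    nlinarith

/-- The optimal point of the semidefinite program (the singlet projector). -/
noncomputable def Xopt : Matrix Q2 Q2 ℂ := Matrix.of fun i j =>
  if i.1 ≠ i.2 ∧ j.1 ≠ j.2 then (if i.1 = j.1 then 1 / 2 else -1 / 2) else 0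

lemma fstar_val (p : ℝ) (hp0 : 0 < p) (hp1 : p < 1) : FStar (rhoE p) = 1 - p / 2 := by
  have h2 : 0 < 2 - p := by linarith
  have hmem : (1 - p / 2) ∈ {x : ℝ | ∃ X : Matrix Q2 Q2 ℂ,
    X.IsHermitian ∧ X.PosSemidef ∧ ((1 : Matrix Q2 Q2 ℂ) - X).PosSemidef ∧
    (ptrans X + (1 / 2 : ℂ) • (1 : Matrix Q2 Q2 ℂ)).PosSemidef ∧
    ((1 / 2 : ℂ) • (1 : Matrix Q2 Q2 ℂ) - ptrans X).PosSemidef ∧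
    x = 1 / 2 - ((X * ptrans (rhoE p)).trace).re} := by
    have hX : Xopt.PosSemidef := by
      apply psd_of_proj
      ext ⟨i1, i2⟩ ⟨j1, j2⟩
      fin_cases i1 <;> fin_cases i2 <;> fin_cases j1 <;> fin_cases j2 <;>
        simp [Matrix.mul_apply, Fintype.sum_prod_type, Xopt, conj_two] <;> norm_num
    refine ⟨Xopt, hX.isHermitian, hX, ?_, ?_, ?_, ?_⟩
    · apply psd_of_proj
      ext ⟨i1, i2⟩ ⟨j1, j2⟩
      fin_cases i1 <;> fin_cases i2 <;> fin_cases j1 <;> fin_cases j2 <;>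
        simp [Matrix.mul_apply, Fintype.sum_prod_type, Xopt, conj_two, Matrix.one_apply] <;> norm_num
    · apply psd_of_proj
      ext ⟨i1, i2⟩ ⟨j1, j2⟩
      fin_cases i1 <;> fin_cases i2 <;> fin_cases j1 <;> fin_cases j2 <;>
        simp [Matrix.mul_apply, Fintype.sum_prod_type, Xopt, conj_two, Matrix.one_apply, ptrans] <;>
        norm_num
    · apply psd_of_proj
      ext ⟨i1, i2⟩ ⟨j1, j2⟩
      fin_cases i1 <;> fin_cases i2 <;> fin_cases j1 <;> fin_cases j2 <;>
        simp [Matrix.mul_apply, Fintype.sum_prod_type, Xopt, conj_two, Matrix.one_apply, ptrans] <;>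
        norm_num
    · rw [trace_val]
      simp [Xopt]
      field_simp
      ring
  apply IsLUB.csSup_eq _ ⟨_, hmem⟩
  apply IsGreatest.isLUB
  refine ⟨hmem, ?_⟩
  rintro x ⟨X, -, hX, -, hA, hB, rfl⟩
  rw [trace_val]
  have c1 := psd_one X hX (0, 0)
  have c2 := psd_two X hX (0, 1) (1, 0)
  have c3 := psd_two _ hA (0, 0) (1, 1)
  have c4 := psd_one _ hB (0, 1)
  simp [ptrans, Matrix.one_apply] at c3 c4
  generalize (X (0, 0) (0, 0)).re = x00 at *
  generalize (X (1, 1) (1, 1)).re = x11 at *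
  generalize (X (0, 1) (0, 1)).re = x01 at *
  generalize (X (1, 0) (1, 0)).re = x10 at *
  generalize (X (0, 1) (1, 0)).re = z at *
  generalize (X (1, 0) (0, 1)).re = w at *
  have key : -((2 - p) * (1 - p) / 2) ≤
      x00 + (1 - p) ^ 2 * x11 + p * (1 - p) * x10 + (1 - p) * (z + w) := by
    have hpq : 0 ≤ p * (1 - p) := mul_nonneg hp0.le (by linarith)
    have t1 := mul_nonneg (sq_nonneg (1 - p)) c3
    have t2 := mul_nonneg hpq c2
    have t3 := mul_nonneg hpq (sub_nonneg.2 c4)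
    have t5 : 0 ≤ (1 - (1 - p) ^ 2) * x00 := mul_nonneg (by nlinarith) c1
    nlinarith
  have e : 1 / (2 - p) * x00 + (1 - p) ^ 2 / (2 - p) * x11 + p * (1 - p) / (2 - p) * x10
      + (1 - p) / (2 - p) * (z + w)
      = (x00 + (1 - p) ^ 2 * x11 + p * (1 - p) * x10 + (1 - p) * (z + w)) / (2 - p) := by ring
  rw [e]
  have : -((1 - p) / 2) ≤
      (x00 + (1 - p) ^ 2 * x11 + p * (1 - p) * x10 + (1 - p) * (z + w)) / (2 - p) := by
    rw [le_div_iff₀ h2]; linarith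
  linarith

/-- For `0 < p < 1` and the optimal transmitted state `|χ₀⟩`, the optimal
fidelity requires no local post-processing:
`F*(ρ(χ₀, Λ_p)) = F(ρ(χ₀, Λ_p)) = 1 − p/2`. -/
theorem no_postprocessing_needed (p : ℝ) (hp0 : 0 < p) (hp1 : p < 1) :
    FStar (ampDamp p (outer (ketChi0 p))) = Fid (ampDamp p (outer (ketChi0 p))) ∧
    Fid (ampDamp p (outer (ketChi0 p))) = 1 - p / 2 := by
  rw [rho_eq p hp0 hp1, fid_val p hp0 hp1, fstar_val p hp0 hp1]
  exact ⟨rfl, rfl⟩
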